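/- arXiv:2509.14538 — 2 statements merged into one kernel-verified Lean document; each statement's English description precedes it below -/
import Mathlib

section
/- Let n = 2 and fix g = 4π ∑_{j=1}^{k₁} m_j δ_{p_j}, h = 4π ∑_{j=1}^{k₂} n_j δ_{q_j} with m_j, n_j ∈ ℕ. For each λ > 0 let (u_λ, v_λ) be a topological solution of Δu = λ e^v (e^u − 1) + g, Δv = λ e^u (e^v − 1) + h on ℤ². Then for every x ∈ ℤ², as λ → 0⁺: if g ≢ 0 and h ≢ 0 then u_λ(x) → −∞ and v_λ(x) → −∞; if g ≢ 0 and h ≡ 0 then u_λ(x) → −∞ and v_λ(x) → 0; if g ≡ 0 and h ≢ 0 then u_λ(x) → 0 and v_λ(x) → −∞; if g ≡ 0 and h ≡ 0 then u_λ(x) → 0 and v_λ(x) → 0. -/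
/-!
The maximum principle gives `u ≤ 0` and `v ≤ 0`; if `g ≡ 0` the minimum principle also gives
`u ≥ 0`, so `u ≡ 0`.

If `g ≢ 0`, then `W = 1 - u` is positive and, because `λ eᵛ (1 - eᵘ) ≤ λ (-u)`, satisfies
`ΔW ≤ λ W - g`. Testing this against `η² / W` for a finitely supported `η` and using Picone's
inequality edge by edge gives (`capacity_bound`)
`g(p) η(p)² / W(p) ≤ λ ‖η‖² + energy η`.
For the logarithmic cutoff `η` of radius `N` the value `η(p)` is the harmonic sum `H_N`, while the
energy is only `O(H_N)` (`energy_cutoff_le`, which expresses the recurrence of `ℤ²`). Taking `N`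
large and then `λ` small forces `W(p) → ∞` at every point `p` with `g(p) > 0`. The inequality
`ΔW ≤ λ W` bounds `W(x)` below by a fixed fraction of `W(y)` for `y ~ x` (`tendsto_neighbour`), so
the divergence spreads over the connected graph `ℤ²`. The statements for `v` follow by exchanging
the roles of the two equations.
-/

open Filter Real

noncomputable section

namespace CS

abbrev Lat (n : ℕ) := Fin n → ℤ

/-- d(x) = ∑ᵢ |xᵢ|, the graph distance to the origin on ℤⁿ. -/
def latDist {n : ℕ} (x : Lat n) : ℕ := ∑ i, (x i).natAbs

/-- x ~ y iff ∑ᵢ |xᵢ − yᵢ| = 1. -/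
def adjacent {n : ℕ} (x y : Lat n) : Prop := (∑ i, (x i - y i).natAbs) = 1

instance {n : ℕ} (x y : Lat n) : Decidable (adjacent x y) :=
  decidable_of_iff ((∑ i, (x i - y i).natAbs) = 1) Iff.rfl

def unitVec {n : ℕ} (i : Fin n) : Lat n := fun j => if j = i then 1 else 0

/-- The graph Laplacian Δu(x) = ∑_{y ~ x} (u(y) − u(x)) on ℤⁿ. -/
def lapl {n : ℕ} (u : Lat n → ℝ) (x : Lat n) : ℝ :=
  ∑ i, (u (x + unitVec i) + u (x - unitVec i) - 2 * u x)

/-- The filter of neighborhoods of infinity (d(x) → +∞) on ℤⁿ. -/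
def atInfty (n : ℕ) : Filter (Lat n) := Filter.comap latDist Filter.atTop

/-- The Dirac mass at p. -/
def dirac {n : ℕ} (p x : Lat n) : ℝ := if x = p then 1 else 0

/-- (u,v) is a topological solution of Δu = λ eᵛ(eᵘ−1) + g, Δv = λ eᵘ(eᵛ−1) + h
with u, v → 0 at infinity. -/
def IsTopSol {n : ℕ} (lam : ℝ) (g h u v : Lat n → ℝ) : Prop :=
  (∀ x, lapl u x = lam * Real.exp (v x) * (Real.exp (u x) - 1) + g x) ∧
  (∀ x, lapl v x = lam * Real.exp (u x) * (Real.exp (v x) - 1) + h x) ∧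
  Filter.Tendsto u (atInfty n) (nhds 0) ∧
  Filter.Tendsto v (atInfty n) (nhds 0)

/-! ### Maximum principle and the supersolution inequality -/

lemma finite_latDist_le (R : ℕ) : {x : Lat 2 | latDist x ≤ R}.Finite := by
  refine (Set.finite_Icc (fun _ => -(R : ℤ)) (fun _ => (R : ℤ))).subset fun x hx => ?_
  simp only [latDist, Fin.sum_univ_two, Set.mem_ofPred_eq] at hx
  refine ⟨fun i => ?_, fun i => ?_⟩ <;> fin_cases i <;> simp <;> omega

/-- A function vanishing at infinity and positive somewhere attains a positive global maximum. -/
lemma exists_pos_max {u : Lat 2 → ℝ} (hu : Tendsto u (atInfty 2) (nhds 0))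
    {x₀ : Lat 2} (hx₀ : 0 < u x₀) : ∃ z, 0 < u z ∧ ∀ y, u y ≤ u z := by
  have h1 : ∀ᶠ x in atInfty 2, u x < u x₀ := hu.eventually (gt_mem_nhds hx₀)
  obtain ⟨R, -, hR⟩ := (atTop_basis.comap (latDist (n := 2))).eventually_iff.1 h1
  have hfin : {x | u x₀ ≤ u x}.Finite := by
    refine (finite_latDist_le R).subset fun x hx => ?_
    by_contra hlt
    have hlt' : R < latDist x := not_le.1 hlt
    exact absurd (hR (show latDist x ∈ Set.Ici R from hlt'.le)) (not_lt.2 hx)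
  obtain ⟨z, hz, hmax⟩ := Set.exists_max_image _ u hfin ⟨x₀, le_refl (u x₀)⟩
  refine ⟨z, hx₀.trans_le hz, fun y => ?_⟩
  rcases le_total (u x₀) (u y) with h | h
  · exact hmax y h
  · exact h.trans hz

lemma IsTopSol.symm {lam : ℝ} {g h u v : Lat 2 → ℝ} (H : IsTopSol lam g h u v) :
    IsTopSol lam h g v u :=
  ⟨H.2.1, H.1, H.2.2.2, H.2.2.1⟩

/-- Maximum principle: at a positive maximum of `u` the right-hand side would be positive. -/
lemma IsTopSol.nonpos {lam : ℝ} {g h u v : Lat 2 → ℝ} (H : IsTopSol lam g h u v)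
    (hlam : 0 < lam) (hg : ∀ x, 0 ≤ g x) (x : Lat 2) : u x ≤ 0 := by
  by_contra hx
  obtain ⟨z, hz, hmax⟩ := exists_pos_max H.2.2.1 (not_le.1 hx)
  have h1 : lapl u z ≤ 0 :=
    Finset.sum_nonpos fun i _ => by linarith [hmax (z + unitVec i), hmax (z - unitVec i)]
  have h2 : 0 < lam * Real.exp (v z) * (Real.exp (u z) - 1) :=
    mul_pos (mul_pos hlam (Real.exp_pos _)) (by linarith [Real.one_lt_exp_iff.2 hz])
  linarith [H.1 z, hg z]

/-- Minimum principle: without source, `u` has no negative minimum. -/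
lemma IsTopSol.nonneg_of_source_zero {lam : ℝ} {g h u v : Lat 2 → ℝ}
    (H : IsTopSol lam g h u v) (hlam : 0 < lam) (hg : ∀ x, g x = 0) (x : Lat 2) : 0 ≤ u x := by
  by_contra hx
  have hlim : Tendsto (fun y => -u y) (atInfty 2) (nhds 0) := by simpa using H.2.2.1.neg
  obtain ⟨z, hz, hmax⟩ := exists_pos_max hlim (x₀ := x) (by simpa using hx)
  have h1 : 0 ≤ lapl u z :=
    Finset.sum_nonneg fun i _ => by linarith [hmax (z + unitVec i), hmax (z - unitVec i)]
  have h2 : 0 < lam * Real.exp (v z) * (1 - Real.exp (u z)) :=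
    mul_pos (mul_pos hlam (Real.exp_pos _))
      (by linarith [Real.exp_lt_one_iff.2 (show u z < 0 by linarith)])
  linarith [H.1 z, hg z]

/-- The function `1 - u` is a positive supersolution of the resolvent equation with source `g`:
since `v ≤ 0`, the nonlinearity satisfies `λ eᵛ (1 - eᵘ) ≤ λ (-u)`. -/
lemma IsTopSol.lapl_one_sub_le {lam : ℝ} {g h u v : Lat 2 → ℝ} (H : IsTopSol lam g h u v)
    (hlam : 0 < lam) (hg : ∀ x, 0 ≤ g x) (hh : ∀ x, 0 ≤ h x) (x : Lat 2) :
    lapl (fun y => 1 - u y) x ≤ lam * (1 - u x) - g x := by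
  have e : lapl (fun y => 1 - u y) x = -lapl u x := by
    simp only [lapl, ← Finset.sum_neg_distrib]
    exact Finset.sum_congr rfl fun i _ => by ring
  have hu := H.nonpos hlam hg x
  have hv := H.symm.nonpos hlam hh x
  have h1 : Real.exp (v x) ≤ 1 := Real.exp_le_one_iff.2 hv
  have h2 : Real.exp (u x) ≤ 1 := Real.exp_le_one_iff.2 hu
  have h3 := Real.add_one_le_exp (u x)
  have h4 : Real.exp (v x) * (1 - Real.exp (u x)) ≤ 1 - Real.exp (u x) :=
    mul_le_of_le_one_left (by linarith) h1
  have h5 : lam * (Real.exp (v x) * (1 - Real.exp (u x))) ≤ lam * (1 - u x) :=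
    mul_le_mul_of_nonneg_left (by linarith) hlam.le
  rw [e, H.1 x]
  nlinarith [h5]

/-! ### Picone's inequality and the capacity bound -/

/-- Picone's inequality on a single edge. -/
lemma picone {a b s t : ℝ} (ha : 0 < a) (hb : 0 < b) :
    -(t - s) ^ 2 ≤ (s ^ 2 / a - t ^ 2 / b) * (b - a) := by
  have : (s ^ 2 / a - t ^ 2 / b) * (b - a) + (t - s) ^ 2 = (s * b - t * a) ^ 2 / (a * b) := by
    field_simp
    ring
  have h2 : 0 ≤ (s * b - t * a) ^ 2 / (a * b) := by positivity
  linarith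

/-- Picone inequality summed over all edges `x, x + e` with a fixed shift `e`, after
summation by parts. -/
lemma picone_sum {W η : Lat 2 → ℝ} (hW : ∀ x, 0 < W x) (hη : η.support.Finite) (e : Lat 2) :
    Summable (fun x => η x ^ 2 / W x * (W (x + e) + W (x - e) - 2 * W x)) ∧
    -∑' x, (η (x + e) - η x) ^ 2 ≤
      ∑' x, η x ^ 2 / W x * (W (x + e) + W (x - e) - 2 * W x) := by
  have hs : ∀ F : Lat 2 → ℝ, (∀ x, η x = 0 → F x = 0) → Summable F := fun F hF =>
    summable_of_hasFiniteSupport (hη.subset fun x hx h0 => hx (hF x h0))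
  set A : Lat 2 → ℝ := fun x => η x ^ 2 / W x * (W (x + e) - W x) with hA
  set B : Lat 2 → ℝ := fun x => η x ^ 2 / W x * (W x - W (x - e)) with hB
  have sA : Summable A := hs _ fun x h => by simp [hA, h]
  have sB : Summable B := hs _ fun x h => by simp [hB, h]
  have sB' : Summable (fun x => B (x + e)) := (Equiv.addRight e).summable_iff.2 sB
  have tB : ∑' x, B (x + e) = ∑' x, B x := (Equiv.addRight e).tsum_eq B
  have sη : Summable (fun x => η x ^ 2) := hs _ fun x h => by simp [h]
  have sD : Summable (fun x => (η (x + e) - η x) ^ 2) := by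
    refine Summable.of_nonneg_of_le (fun x => sq_nonneg _)
      (fun x => ?_) ((((Equiv.addRight e).summable_iff.2 sη).add sη).mul_left 2)
    simp only [Function.comp, Equiv.coe_addRight]
    nlinarith [sq_nonneg (η (x + e) + η x)]
  have hAB : (fun x => η x ^ 2 / W x * (W (x + e) + W (x - e) - 2 * W x)) =
      fun x => A x - B x := by
    funext x
    simp only [hA, hB]
    ring
  rw [hAB]
  refine ⟨sA.sub sB, ?_⟩
  rw [sA.tsum_sub sB, ← tB, ← sA.tsum_sub sB', ← tsum_neg]
  refine sD.neg.tsum_le_tsum (fun x => ?_) (sA.sub sB')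
  have := picone (s := η x) (t := η (x + e)) (hW x) (hW (x + e))
  simp only [hA, hB, add_sub_cancel_right]
  linarith

/-- The Dirichlet energy of a test function on `ℤ²`. -/
def energy (η : Lat 2 → ℝ) : ℝ := ∑ i, ∑' x, (η (x + unitVec i) - η x) ^ 2

/-- Testing the supersolution inequality against `η² / W`. -/
lemma capacity_bound {lam : ℝ} {W g η : Lat 2 → ℝ} (hW : ∀ x, 0 < W x) (hg : ∀ x, 0 ≤ g x)
    (hsup : ∀ x, lapl W x ≤ lam * W x - g x) (hη : η.support.Finite) (p : Lat 2) :
    g p * (η p ^ 2 / W p) ≤ lam * ∑' x, η x ^ 2 + energy η := by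
  have hs : ∀ F : Lat 2 → ℝ, (∀ x, η x = 0 → F x = 0) → Summable F := fun F hF =>
    summable_of_hasFiniteSupport (hη.subset fun x hx h0 => hx (hF x h0))
  have sη : Summable (fun x => η x ^ 2) := hs _ fun x h => by simp [h]
  have sg : Summable (fun x => g x * (η x ^ 2 / W x)) := hs _ fun x h => by simp [h]
  have sL : Summable (fun x => η x ^ 2 / W x * lapl W x) := hs _ fun x h => by simp [h]
  have h1 : -energy η ≤ ∑' x, η x ^ 2 / W x * lapl W x := by
    simp only [lapl, Finset.mul_sum, energy]
    rw [Summable.tsum_finsetSum fun i _ => (picone_sum hW hη (unitVec i)).1,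
      ← Finset.sum_neg_distrib]
    exact Finset.sum_le_sum fun i _ => (picone_sum hW hη (unitVec i)).2
  have h2 : ∑' x, η x ^ 2 / W x * lapl W x ≤
      ∑' x, (lam * η x ^ 2 - g x * (η x ^ 2 / W x)) := by
    refine sL.tsum_le_tsum (fun x => ?_) ((sη.mul_left lam).sub sg)
    have hψ : 0 ≤ η x ^ 2 / W x := div_nonneg (sq_nonneg _) (hW x).le
    refine (mul_le_mul_of_nonneg_left (hsup x) hψ).trans_eq ?_
    have := (hW x).ne'
    field_simp
  rw [(sη.mul_left lam).tsum_sub sg, tsum_mul_left] at h2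
  have h3 : g p * (η p ^ 2 / W p) ≤ ∑' x, g x * (η x ^ 2 / W x) :=
    sg.le_tsum p fun x _ => mul_nonneg (hg x) (div_nonneg (sq_nonneg _) (hW x).le)
  linarith

/-! ### Logarithmic cutoffs -/

/-- The logarithmic radial profile `∑_{n ≤ k < N} 1 / (k + 1)`, which vanishes for `n ≥ N`. -/
def cut (N n : ℕ) : ℝ := ∑ k ∈ Finset.Ico n N, 1 / ((k : ℝ) + 1)

lemma cut_eq_zero {N n : ℕ} (h : N ≤ n) : cut N n = 0 := by
  simp [cut, Finset.Ico_eq_empty_of_le h]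

lemma cut_step (N n : ℕ) : 0 ≤ cut N n - cut N (n + 1) ∧
    cut N n - cut N (n + 1) ≤ 1 / ((n : ℝ) + 1) := by
  have hpos : (0 : ℝ) ≤ 1 / ((n : ℝ) + 1) := by positivity
  rcases lt_or_ge n N with h | h
  · have : cut N n = 1 / ((n : ℝ) + 1) + cut N (n + 1) :=
      Finset.sum_eq_sum_Ico_succ_bot h _
    constructor <;> linarith
  · rw [cut_eq_zero h, cut_eq_zero (by omega)]
    simpa using hpos

lemma cut_sq_step {N n l : ℕ} (h : l = n + 1 ∨ n = l + 1) :
    (cut N l - cut N n) ^ 2 ≤ 4 * (1 / ((n : ℝ) + 1) ^ 2) := by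
  have key : |cut N l - cut N n| ≤ 2 / ((n : ℝ) + 1) := by
    rcases h with rfl | rfl
    · obtain ⟨h1, h2⟩ := cut_step N n
      rw [abs_sub_comm, abs_of_nonneg h1]
      refine h2.trans ?_
      gcongr
      norm_num
    · obtain ⟨h1, h2⟩ := cut_step N l
      rw [abs_of_nonneg h1]
      refine h2.trans ?_
      push_cast
      rw [div_le_div_iff₀ (by positivity) (by positivity)]
      have : (0 : ℝ) ≤ l := Nat.cast_nonneg l
      linarith
  have h2 := pow_le_pow_left₀ (abs_nonneg _) key 2
  rw [sq_abs, div_pow] at h2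
  refine h2.trans_eq ?_
  ring

lemma latDist_add_unitVec (x : Lat 2) (i : Fin 2) :
    latDist (x + unitVec i) = latDist x + 1 ∨ latDist x = latDist (x + unitVec i) + 1 := by
  fin_cases i <;> simp [latDist, unitVec, Fin.sum_univ_two] <;> omega

lemma sum_Icc_natAbs_le (N : ℕ) (φ : ℕ → ℝ) (hφ : ∀ k, 0 ≤ φ k) :
    ∑ a ∈ Finset.Icc (-(N : ℤ)) N, φ a.natAbs ≤ 2 * ∑ k ∈ Finset.range (N + 1), φ k := by
  classical
  set S := (Finset.range (N + 1)).image (fun k : ℕ => (k : ℤ))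
  set T := (Finset.range (N + 1)).image (fun k : ℕ => -(k : ℤ))
  have hsub : Finset.Icc (-(N : ℤ)) N ⊆ S ∪ T := by
    intro a ha
    rw [Finset.mem_Icc] at ha
    simp only [S, T, Finset.mem_union, Finset.mem_image, Finset.mem_range]
    rcases le_total 0 a with h | h
    · exact Or.inl ⟨a.natAbs, by omega, by omega⟩
    · exact Or.inr ⟨a.natAbs, by omega, by omega⟩
  have h1 : ∑ a ∈ Finset.Icc (-(N : ℤ)) N, φ a.natAbs ≤ ∑ a ∈ S ∪ T, φ a.natAbs :=
    Finset.sum_le_sum_of_subset_of_nonneg hsub fun _ _ _ => hφ _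
  have h2 : ∑ a ∈ S ∪ T, φ a.natAbs ≤ ∑ a ∈ S, φ a.natAbs + ∑ a ∈ T, φ a.natAbs := by
    rw [← Finset.sum_union_inter]
    linarith [Finset.sum_nonneg fun (a : ℤ) (_ : a ∈ S ∩ T) => hφ a.natAbs]
  have hS : ∑ a ∈ S, φ a.natAbs = ∑ k ∈ Finset.range (N + 1), φ k := by
    rw [Finset.sum_image fun a _ b _ h => by simpa using h]
    simp
  have hT : ∑ a ∈ T, φ a.natAbs = ∑ k ∈ Finset.range (N + 1), φ k := by
    rw [Finset.sum_image fun a _ b _ h => by simpa using h]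
    simp
  linarith

/-- Telescoping bound for the tail of `∑ 1 / m²`. -/
lemma sum_inv_sq_le (a n : ℕ) :
    ∑ b ∈ Finset.range n, 1 / ((a : ℝ) + b + 1) ^ 2 ≤ 2 * (1 / ((a : ℝ) + 1)) := by
  have h : ∀ n : ℕ, ∑ b ∈ Finset.range n, 1 / ((a : ℝ) + b + 1) ^ 2 ≤
      2 * (1 / ((a : ℝ) + 1)) - 2 * (1 / ((a : ℝ) + n + 1)) := by
    intro n
    induction n with
    | zero => simp
    | succ n ih =>
      rw [Finset.sum_range_succ]
      have hm : (0 : ℝ) ≤ (a : ℝ) + n := by positivity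
      have : 1 / ((a : ℝ) + n + 1) ^ 2 ≤
          2 * (1 / ((a : ℝ) + n + 1)) - 2 * (1 / ((a : ℝ) + n + 2)) := by
        have e : 2 * (1 / ((a : ℝ) + n + 1)) - 2 * (1 / ((a : ℝ) + n + 2)) =
            2 / (((a : ℝ) + n + 1) * ((a : ℝ) + n + 2)) := by
          field_simp
          ring
        rw [e, div_le_div_iff₀ (by positivity) (by positivity)]
        nlinarith
      push_cast
      have e2 : (a : ℝ) + (n + 1) + 1 = a + n + 2 := by ring
      rw [e2]
      linarith
  have := h n
  have h0 : (0 : ℝ) ≤ 2 * (1 / ((a : ℝ) + n + 1)) := by positivity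
  linarith

/-- The square `[-N, N]²` in `ℤ²`. -/
def box (N : ℕ) : Finset (Lat 2) :=
  (Finset.Icc (-(N : ℤ)) N ×ˢ Finset.Icc (-(N : ℤ)) N).map (finTwoArrowEquiv ℤ).symm.toEmbedding

lemma mem_box_of_latDist_le {N : ℕ} {x : Lat 2} (hx : latDist x ≤ N) : x ∈ box N := by
  simp only [latDist, Fin.sum_univ_two] at hx
  simp only [box, Finset.mem_map_equiv, Equiv.symm_symm, finTwoArrowEquiv_apply,
    Finset.mem_product, Finset.mem_Icc]
  change (-(N : ℤ) ≤ x 0 ∧ x 0 ≤ N) ∧ -(N : ℤ) ≤ x 1 ∧ x 1 ≤ N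
  omega

lemma sum_box_le (N : ℕ) :
    ∑ x ∈ box N, 1 / ((latDist x : ℝ) + 1) ^ 2 ≤
      8 * ∑ k ∈ Finset.range (N + 1), 1 / ((k : ℝ) + 1) := by
  have e : ∑ x ∈ box N, 1 / ((latDist x : ℝ) + 1) ^ 2 =
      ∑ a ∈ Finset.Icc (-(N : ℤ)) N, ∑ b ∈ Finset.Icc (-(N : ℤ)) N,
        1 / ((a.natAbs : ℝ) + (b.natAbs : ℝ) + 1) ^ 2 := by
    rw [box, Finset.sum_map, Finset.sum_product]
    refine Finset.sum_congr rfl fun a _ => Finset.sum_congr rfl fun b _ => ?_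
    simp [latDist, Fin.sum_univ_two]
  rw [e]
  calc _ ≤ ∑ a ∈ Finset.Icc (-(N : ℤ)) N, 4 * (1 / ((a.natAbs : ℝ) + 1)) := by
        refine Finset.sum_le_sum fun a _ => ?_
        have h1 := sum_Icc_natAbs_le N (fun k => 1 / ((a.natAbs : ℝ) + (k : ℝ) + 1) ^ 2)
          fun k => by positivity
        have h2 := sum_inv_sq_le a.natAbs (N + 1)
        exact h1.trans (by linarith)
    _ ≤ _ := by
        have h1 := sum_Icc_natAbs_le N (fun k => 4 * (1 / ((k : ℝ) + 1))) fun k => by positivity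
        refine h1.trans_eq ?_
        rw [← Finset.mul_sum]
        ring

/-- The logarithmic cutoff centred at `p`. -/
def cutoff (N : ℕ) (p x : Lat 2) : ℝ := cut N (latDist (x - p))

lemma cutoff_support_finite (N : ℕ) (p : Lat 2) : (cutoff N p).support.Finite := by
  refine ((finite_latDist_le N).image fun x => x + p).subset fun x hx => ?_
  refine (Set.mem_image _ _ _).2 ⟨x - p, ?_, sub_add_cancel x p⟩
  change latDist (x - p) ≤ N
  by_contra h
  exact hx (cut_eq_zero (not_le.1 h).le)

lemma cutoff_self (N : ℕ) (p : Lat 2) :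
    cutoff N p p = ∑ k ∈ Finset.range N, 1 / ((k : ℝ) + 1) := by
  simp [cutoff, cut, latDist]

/-- The energy of the logarithmic cutoff grows only like its value at the centre, not like the
square of that value. This is the recurrence of `ℤ²`. -/
lemma energy_cutoff_le (N : ℕ) (p : Lat 2) :
    energy (cutoff N p) ≤ 64 * (cutoff N p p + 1) := by
  have hdir : ∀ i : Fin 2, ∑' x, (cutoff N p (x + unitVec i) - cutoff N p x) ^ 2 ≤
      32 * ∑ k ∈ Finset.range (N + 1), 1 / ((k : ℝ) + 1) := by
    intro i
    have e1 : ∑' x, (cutoff N p (x + unitVec i) - cutoff N p x) ^ 2 =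
        ∑' x, (cut N (latDist (x + unitVec i)) - cut N (latDist x)) ^ 2 := by
      rw [← (Equiv.subRight p).tsum_eq
        fun x => (cut N (latDist (x + unitVec i)) - cut N (latDist x)) ^ 2]
      refine tsum_congr fun x => ?_
      simp only [cutoff, Equiv.subRight_apply]
      rw [add_sub_right_comm]
    rw [e1, tsum_eq_sum (s := box N)]
    · calc _ ≤ ∑ x ∈ box N, 4 * (1 / ((latDist x : ℝ) + 1) ^ 2) :=
            Finset.sum_le_sum fun x _ => cut_sq_step (latDist_add_unitVec x i)
        _ ≤ _ := by
            rw [← Finset.mul_sum]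
            linarith [sum_box_le N]
    · intro x hx
      have h1 : N < latDist x := not_le.1 fun h => hx (mem_box_of_latDist_le h)
      have h2 : N ≤ latDist (x + unitVec i) := by
        have := latDist_add_unitVec x i
        omega
      rw [cut_eq_zero h1.le, cut_eq_zero h2]
      simp
  have hlast : ∑ k ∈ Finset.range (N + 1), 1 / ((k : ℝ) + 1) ≤ cutoff N p p + 1 := by
    rw [cutoff_self, Finset.sum_range_succ]
    have : 1 / ((N : ℝ) + 1) ≤ 1 := by
      rw [div_le_one (by positivity)]
      linarith [(Nat.cast_nonneg N : (0 : ℝ) ≤ N)]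
    linarith
  rw [energy, Fin.sum_univ_two]
  linarith [hdir 0, hdir 1]

/-! ### The limit `λ → 0⁺` -/

section Asymptotics

variable {g h : Lat 2 → ℝ} {U V : ℝ → Lat 2 → ℝ}

lemma tendsto_at_source (hg : ∀ x, 0 ≤ g x) (hh : ∀ x, 0 ≤ h x)
    (hsol : ∀ lam : ℝ, 0 < lam → IsTopSol lam g h (U lam) (V lam)) {p : Lat 2} (hp : 0 < g p) :
    Tendsto (fun lam => 1 - U lam p) (nhdsWithin 0 (Set.Ioi 0)) atTop := by
  refine tendsto_atTop.2 fun M => ?_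
  obtain ⟨N, hN⟩ := (Real.tendsto_sum_range_one_div_nat_succ_atTop.eventually_ge_atTop
    (max 1 (M * 129 / g p))).exists
  rw [← cutoff_self N p] at hN
  set H := cutoff N p p with hH
  have hH1 : 1 ≤ H := (le_max_left _ _).trans hN
  have hHM : M * 129 ≤ H * g p := (div_le_iff₀ hp).1 ((le_max_right _ _).trans hN)
  set S := ∑' x, cutoff N p x ^ 2 with hS
  have hS0 : 0 ≤ S := tsum_nonneg fun x => sq_nonneg _
  have hpos : (0 : ℝ) < 1 / (S + 1) := by positivity
  filter_upwards [Ioo_mem_nhdsGT hpos] with lam hlam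
  have hsl := hsol lam hlam.1
  have hW : ∀ x, 0 < 1 - U lam x := fun x => by linarith [hsl.nonpos hlam.1 hg x]
  have hb := capacity_bound hW hg (hsl.lapl_one_sub_le hlam.1 hg hh)
    (cutoff_support_finite N p) p
  have hE := energy_cutoff_le N p
  have hlS : lam * S ≤ 1 := by
    have := (lt_div_iff₀ (by positivity : (0 : ℝ) < S + 1)).1 hlam.2
    nlinarith [hlam.1]
  have h1 : g p * (H ^ 2 / (1 - U lam p)) ≤ 129 * H := by linarith
  rw [← mul_div_assoc, div_le_iff₀ (hW p)] at h1
  have h2 : g p * H ≤ 129 * (1 - U lam p) := by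
    refine le_of_mul_le_mul_right ?_ (by linarith : 0 < H)
    linarith
  linarith

/-- Divergence passes from `y` to any neighbour `x`, because of the Harnack-type inequality
`W(x) ≥ W(y) / 5` for the supersolution `W = 1 - u` when `λ < 1`. -/
lemma tendsto_neighbour (hg : ∀ x, 0 ≤ g x) (hh : ∀ x, 0 ≤ h x)
    (hsol : ∀ lam : ℝ, 0 < lam → IsTopSol lam g h (U lam) (V lam)) {x y : Lat 2}
    (hxy : ∃ i, y = x + unitVec i ∨ y = x - unitVec i)
    (hy : Tendsto (fun lam => 1 - U lam y) (nhdsWithin 0 (Set.Ioi 0)) atTop) :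
    Tendsto (fun lam => 1 - U lam x) (nhdsWithin 0 (Set.Ioi 0)) atTop := by
  refine tendsto_atTop_mono' _ ?_ (hy.atTop_div_const (show (0 : ℝ) < 5 by norm_num))
  filter_upwards [Ioo_mem_nhdsGT (show (0 : ℝ) < 1 by norm_num)] with lam hlam
  have hsl := hsol lam hlam.1
  have hW : ∀ x, 0 < 1 - U lam x := fun x => by linarith [hsl.nonpos hlam.1 hg x]
  have hL := hsl.lapl_one_sub_le hlam.1 hg hh x
  simp only [lapl, Fin.sum_univ_two] at hL
  have h5 : lam * (1 - U lam x) ≤ 1 - U lam x := mul_le_of_le_one_left (hW x).le hlam.2.le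
  have a1 := hW (x + unitVec 0)
  have a2 := hW (x - unitVec 0)
  have a3 := hW (x + unitVec 1)
  have a4 := hW (x - unitVec 1)
  have hgx := hg x
  obtain ⟨i, hi⟩ := hxy
  fin_cases i <;> rcases hi with rfl | rfl <;>
    simp only [Fin.zero_eta, Fin.mk_one] <;> linarith

/-- `ℤ²` is connected: a property stable under passing to neighbours spreads everywhere. -/
lemma lattice_induction {P : Lat 2 → Prop} {p : Lat 2} (hp : P p)
    (hstep : ∀ x y : Lat 2, (∃ i, y = x + unitVec i ∨ y = x - unitVec i) → P y → P x)
    (x : Lat 2) : P x := by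
  have hmove : ∀ (i : Fin 2) (c : ℤ) (z : Lat 2), P z → P (z + c • unitVec i) := by
    intro i c z hz
    induction c using Int.induction_on with
    | zero => simpa using hz
    | succ k ih => exact hstep _ _ ⟨i, Or.inr (by module)⟩ ih
    | pred k ih => exact hstep _ _ ⟨i, Or.inl (by module)⟩ ih
  have := hmove 1 (x 1 - p 1) _ (hmove 0 (x 0 - p 0) p hp)
  convert this using 1
  funext j
  fin_cases j <;> simp [unitVec]

lemma tendsto_atBot_of_source (hg : ∀ x, 0 ≤ g x) (hh : ∀ x, 0 ≤ h x)
    (hsol : ∀ lam : ℝ, 0 < lam → IsTopSol lam g h (U lam) (V lam)) (hne : ¬ ∀ y, g y = 0)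
    (x : Lat 2) :
    Tendsto (fun lam => U lam x) (nhdsWithin 0 (Set.Ioi 0)) atBot := by
  obtain ⟨p, hp⟩ := not_forall.1 hne
  have h1 := tendsto_at_source hg hh hsol (lt_of_le_of_ne (hg p) (Ne.symm hp))
  have h2 := lattice_induction
    (P := fun x => Tendsto (fun lam => 1 - U lam x) (nhdsWithin 0 (Set.Ioi 0)) atTop) h1
    (fun x y hxy hy => tendsto_neighbour hg hh hsol hxy hy) x
  have h3 := tendsto_neg_atTop_atBot.comp (tendsto_atTop_add_const_right _ (-1) h2)
  refine h3.congr fun lam => ?_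
  simp only [Function.comp]
  ring

lemma tendsto_zero_of_no_source (hsol : ∀ lam : ℝ, 0 < lam → IsTopSol lam g h (U lam) (V lam))
    (hg : ∀ y, g y = 0) (x : Lat 2) :
    Tendsto (fun lam => U lam x) (nhdsWithin 0 (Set.Ioi 0)) (nhds 0) := by
  refine tendsto_const_nhds.congr' ?_
  filter_upwards [self_mem_nhdsWithin] with lam hlam
  have hlam' : 0 < lam := hlam
  exact le_antisymm ((hsol lam hlam').nonneg_of_source_zero hlam' hg x)
    ((hsol lam hlam').nonpos hlam' (fun y => (hg y).ge) x)

end Asymptotics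

lemma source_nonneg {k : ℕ} (m : Fin k → ℕ) (p : Fin k → Lat 2) (x : Lat 2) :
    0 ≤ 4 * Real.pi * ∑ j, (m j : ℝ) * dirac (p j) x := by
  refine mul_nonneg (by positivity) (Finset.sum_nonneg fun j _ => mul_nonneg (by positivity) ?_)
  unfold dirac
  split_ifs <;> norm_num

/-- asymptotic behavior on ℤ² as λ → 0⁺: each of u_λ(x), v_λ(x)
tends to −∞ if the corresponding source (g resp. h) is not identically zero,
and tends to 0 if it is identically zero.  This covers all four cases
(g ≢ 0, h ≢ 0), (g ≢ 0, h ≡ 0), (g ≡ 0, h ≢ 0), (g ≡ 0, h ≡ 0). -/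
theorem asymptotics_lambda_to_zero_dim_two
    {k₁ k₂ : ℕ} (m : Fin k₁ → ℕ) (nn : Fin k₂ → ℕ)
    (p : Fin k₁ → Lat 2) (q : Fin k₂ → Lat 2)
    (g h : Lat 2 → ℝ)
    (hg : g = fun x => 4 * Real.pi * ∑ j, (m j : ℝ) * dirac (p j) x)
    (hh : h = fun x => 4 * Real.pi * ∑ j, (nn j : ℝ) * dirac (q j) x)
    (U V : ℝ → Lat 2 → ℝ)
    (hsol : ∀ lam : ℝ, 0 < lam → IsTopSol lam g h (U lam) (V lam))
    (x : Lat 2) :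
    ((¬ ∀ y, g y = 0) →
      Filter.Tendsto (fun lam => U lam x) (nhdsWithin 0 (Set.Ioi 0)) Filter.atBot) ∧
    ((¬ ∀ y, h y = 0) →
      Filter.Tendsto (fun lam => V lam x) (nhdsWithin 0 (Set.Ioi 0)) Filter.atBot) ∧
    ((∀ y, g y = 0) →
      Filter.Tendsto (fun lam => U lam x) (nhdsWithin 0 (Set.Ioi 0)) (nhds 0)) ∧
    ((∀ y, h y = 0) →
      Filter.Tendsto (fun lam => V lam x) (nhdsWithin 0 (Set.Ioi 0)) (nhds 0)) := by
  have hg0 : ∀ y, 0 ≤ g y := fun y => by rw [hg]; exact source_nonneg m p y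
  have hh0 : ∀ y, 0 ≤ h y := fun y => by rw [hh]; exact source_nonneg nn q y
  have hsol' : ∀ lam : ℝ, 0 < lam → IsTopSol lam h g (V lam) (U lam) :=
    fun lam hl => (hsol lam hl).symm
  exact ⟨fun hne => tendsto_atBot_of_source hg0 hh0 hsol hne x,
    fun hne => tendsto_atBot_of_source hh0 hg0 hsol' hne x,
    fun h0 => tendsto_zero_of_no_source hsol h0 x,
    fun h0 => tendsto_zero_of_no_source hsol' h0 x⟩

end CS
end
end

section
/- Let n ≥ 3 and fix g = 4π ∑_{j=1}^{k₁} m_j δ_{p_j}, h = 4π ∑_{j=1}^{k₂} n_j δ_{q_j} with m_j, n_j ∈ ℕ. For each λ > 0 let (u_λ, v_λ) be a topological solution of Δu = λ e^v (e^u − 1) + g, Δv = λ e^u (e^v − 1) + h on ℤⁿ. Let G_n be the Green's function of the Δ operator on ℤⁿ. Then for every x ∈ ℤⁿ, lim_{λ → 0⁺} u_λ(x) = 4π ∑_{j=1}^{k₁} m_j G_n(x − p_j) and lim_{λ → 0⁺} v_λ(x) = 4π ∑_{j=1}^{k₂} n_j G_n(x − q_j). -/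
/-!
Write `Φ = 4π ∑ⱼ mⱼ G(· - pⱼ)`, so that `ΔΦ = g` and `Φ → 0` at infinity.

All comparisons come from one maximum principle (`max_principle`): a function that vanishes at
infinity and is subharmonic wherever it is positive is `≤ 0`. Applied to `U lam` it gives
`U lam ≤ 0` (likewise `V lam ≤ 0`); the nonlinear term is then `≤ 0`, so `Φ - U lam` is
subharmonic and `Φ ≤ U lam`. The family `U lam` is therefore pointwise bounded, uniformly in `lam`.

By compactness of the intervals `[Φ x, 0]`, along every ultrafilter finer than `lam → 0⁺` the
functions `U lam` have a pointwise limit `u`. The nonlinear term is at most `lam` in absolute value,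
so `Δu = g`, and `Φ ≤ u ≤ 0` forces `u → 0` at infinity. Thus `u - Φ` is harmonic and vanishes at
infinity, and the maximum principle gives `u = Φ`. Since the limit is the same along every
ultrafilter, `U lam x → Φ x`.
-/

open Filter Real

noncomputable section

namespace CS

lemma finite_latDist_lt {n : ℕ} (N : ℕ) : {x : Lat n | latDist x < N}.Finite := by
  refine (Set.finite_Icc (fun _ => -(N : ℤ) : Lat n) (fun _ => (N : ℤ))).subset ?_
  intro x hx
  have hx' : latDist x < N := hx
  have key : ∀ i, (x i).natAbs < N := fun i =>
    lt_of_le_of_lt (Finset.single_le_sum (f := fun i => (x i).natAbs)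
      (fun _ _ => Nat.zero_le _) (Finset.mem_univ i)) hx'
  constructor <;> intro i <;> have := key i <;> dsimp only <;> omega

lemma atInfty_eq_cofinite (n : ℕ) : atInfty n = cofinite := by
  apply le_antisymm
  · rw [atInfty, ← Nat.cofinite_eq_atTop]
    exact comap_cofinite_le _
  · rw [atInfty, ← tendsto_iff_comap, tendsto_atTop]
    intro N
    rw [eventually_cofinite]
    simpa only [not_le] using finite_latDist_lt N

/-- A function vanishing at infinity and subharmonic wherever it is positive is nonpositive:
at a maximum point that is extremal in one coordinate direction, the next point in that direction
would have to be a maximum point as well. -/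
lemma max_principle {n : ℕ} (hn : 0 < n) (f : Lat n → ℝ)
    (hlim : Tendsto f (atInfty n) (nhds 0)) (hsub : ∀ x, 0 < f x → 0 ≤ lapl f x) (x : Lat n) :
    f x ≤ 0 := by
  by_contra! hx
  rw [atInfty_eq_cofinite] at hlim
  have hfin : ∀ c : ℝ, 0 < c → {y | c ≤ f y}.Finite := by
    intro c hc
    have := hlim.eventually (gt_mem_nhds hc)
    rw [eventually_cofinite] at this
    simpa only [not_lt] using this
  obtain ⟨y, hy, hmax⟩ := Set.exists_max_image _ f (hfin _ hx) ⟨x, le_refl (f x)⟩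
  have hy : f x ≤ f y := hy
  have hmax' : ∀ z, f z ≤ f y := by
    intro z
    rcases le_total (f x) (f z) with h | h
    · exact hmax z h
    · exact h.trans hy
  have hypos : 0 < f y := hx.trans_le hy
  let i : Fin n := ⟨0, hn⟩
  obtain ⟨z, hz, hzmax⟩ :=
    Set.exists_max_image _ (fun z : Lat n => z i) (hfin _ hypos) ⟨y, le_refl (f y)⟩
  have hz : f y ≤ f z := hz
  have hzero : 0 ≤ lapl f z := hsub z (hypos.trans_le hz)
  have hterm : ∀ j ∈ Finset.univ,
      f (z + unitVec j) + f (z - unitVec j) - 2 * f z ≤ 0 := by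
    intro j _
    linarith [hmax' (z + unitVec j), hmax' (z - unitVec j)]
  have hi := (Finset.sum_eq_zero_iff_of_nonpos hterm).1
    (le_antisymm (Finset.sum_nonpos hterm) hzero) i (Finset.mem_univ i)
  have hnext : f y ≤ f (z + unitVec i) := by
    linarith [hmax' (z - unitVec i)]
  have := hzmax _ hnext
  simp [unitVec] at this

lemma lapl_sub {n : ℕ} (f g : Lat n → ℝ) (x : Lat n) :
    lapl (fun y => f y - g y) x = lapl f x - lapl g x := by
  simp only [lapl, ← Finset.sum_sub_distrib]
  exact Finset.sum_congr rfl fun i _ => by ring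

lemma lapl_const_mul {n : ℕ} (c : ℝ) (f : Lat n → ℝ) (x : Lat n) :
    lapl (fun y => c * f y) x = c * lapl f x := by
  simp only [lapl, Finset.mul_sum]
  exact Finset.sum_congr rfl fun i _ => by ring

lemma lapl_sum {n k : ℕ} (f : Fin k → Lat n → ℝ) (x : Lat n) :
    lapl (fun y => ∑ j, f j y) x = ∑ j, lapl (f j) x := by
  simp only [lapl]
  rw [Finset.sum_comm]
  exact Finset.sum_congr rfl fun i _ => by
    rw [Finset.sum_sub_distrib, Finset.sum_add_distrib, Finset.mul_sum]

lemma lapl_translate {n : ℕ} (f : Lat n → ℝ) (p x : Lat n) :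
    lapl (fun y => f (y - p)) x = lapl f (x - p) := by
  simp only [lapl]
  refine Finset.sum_congr rfl fun i _ => ?_
  rw [show x + unitVec i - p = x - p + unitVec i by abel,
    show x - unitVec i - p = x - p - unitVec i by abel]

lemma lapl_green_sum {n k : ℕ} (m : Fin k → ℕ) (p : Fin k → Lat n) (G : Lat n → ℝ)
    (hG : ∀ x, lapl G x = dirac 0 x) (x : Lat n) :
    lapl (fun x => 4 * Real.pi * ∑ j, (m j : ℝ) * G (x - p j)) x
      = 4 * Real.pi * ∑ j, (m j : ℝ) * dirac (p j) x := by
  rw [lapl_const_mul, lapl_sum]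
  congr 1
  refine Finset.sum_congr rfl fun j _ => ?_
  rw [lapl_const_mul, lapl_translate, hG]
  simp only [dirac, sub_eq_zero]

lemma tendsto_green_sum {n k : ℕ} (m : Fin k → ℕ) (p : Fin k → Lat n) (G : Lat n → ℝ)
    (hGlim : Tendsto G (atInfty n) (nhds 0)) :
    Tendsto (fun x => 4 * Real.pi * ∑ j, (m j : ℝ) * G (x - p j)) (atInfty n) (nhds 0) := by
  rw [atInfty_eq_cofinite] at *
  have h : ∀ j, Tendsto (fun x => (m j : ℝ) * G (x - p j)) cofinite (nhds 0) := by
    intro j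
    have := (hGlim.comp (sub_left_injective (b := p j)).tendsto_cofinite).const_mul (m j : ℝ)
    simpa using this
  have := (tendsto_finsetSum Finset.univ fun j _ => h j).const_mul (4 * Real.pi)
  simpa using this

lemma vortex_nonneg {n k : ℕ} (m : Fin k → ℕ) (p : Fin k → Lat n) (x : Lat n) :
    0 ≤ 4 * Real.pi * ∑ j, (m j : ℝ) * dirac (p j) x := by
  refine mul_nonneg (by positivity) (Finset.sum_nonneg fun j _ => mul_nonneg (by positivity) ?_)
  unfold dirac
  split_ifs <;> norm_num

lemma sol_nonpos {n : ℕ} (hn : 0 < n) {lam : ℝ} (hlam : 0 < lam) (g u v : Lat n → ℝ)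
    (hg : ∀ x, 0 ≤ g x)
    (hu : ∀ x, lapl u x = lam * Real.exp (v x) * (Real.exp (u x) - 1) + g x)
    (hlim : Tendsto u (atInfty n) (nhds 0)) (x : Lat n) : u x ≤ 0 := by
  refine max_principle hn u hlim (fun y hy => ?_) x
  rw [hu]
  have h1 : 0 ≤ Real.exp (u y) - 1 := by linarith [Real.add_one_le_exp (u y)]
  have := hg y
  positivity

/-- Convergence of one component of the system; the other component enters only as a
nonpositive coefficient function `V lam`. -/
lemma tendsto_component {n : ℕ} (hn : 0 < n) (g Φ : Lat n → ℝ) (hg : ∀ x, 0 ≤ g x)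
    (hΦ : ∀ x, lapl Φ x = g x) (hΦlim : Tendsto Φ (atInfty n) (nhds 0))
    (U V : ℝ → Lat n → ℝ)
    (hU : ∀ lam : ℝ, 0 < lam → ∀ x, lapl (U lam) x =
      lam * Real.exp (V lam x) * (Real.exp (U lam x) - 1) + g x)
    (hUlim : ∀ lam : ℝ, 0 < lam → Tendsto (U lam) (atInfty n) (nhds 0))
    (hV : ∀ lam : ℝ, 0 < lam → ∀ x, V lam x ≤ 0) (x : Lat n) :
    Tendsto (fun lam => U lam x) (nhdsWithin 0 (Set.Ioi 0)) (nhds (Φ x)) := by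
  have hU0 : ∀ lam : ℝ, 0 < lam → ∀ x, U lam x ≤ 0 := fun lam hlam =>
    sol_nonpos hn hlam g _ _ hg (hU lam hlam) (hUlim lam hlam)
  have hlow : ∀ lam : ℝ, 0 < lam → ∀ x, Φ x ≤ U lam x := by
    intro lam hlam x
    have := max_principle hn (fun y => Φ y - U lam y)
      (by simpa using hΦlim.sub (hUlim lam hlam)) (fun y _ => ?_) x
    · linarith
    · rw [lapl_sub, hΦ, hU lam hlam]
      have h1 : 0 ≤ 1 - Real.exp (U lam y) := by
        linarith [Real.exp_le_one_iff.2 (hU0 lam hlam y)]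
      have : 0 ≤ lam * Real.exp (V lam y) * (1 - Real.exp (U lam y)) := by positivity
      linarith
  rw [tendsto_iff_ultrafilter]
  intro F hF
  have hpos : ∀ᶠ lam in (F : Filter ℝ), 0 < lam := hF self_mem_nhdsWithin
  have hid : Tendsto (fun lam : ℝ => lam) F (nhds 0) := hF.trans nhdsWithin_le_nhds
  have hex : ∀ y, ∃ a ∈ Set.Icc (Φ y) 0, Tendsto (fun lam => U lam y) F (nhds a) := by
    intro y
    obtain ⟨a, ha, hFa⟩ := (isCompact_Icc (a := Φ y) (b := 0)).ultrafilter_le_nhds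
      (F.map fun lam => U lam y) (by
        rw [le_principal_iff, Ultrafilter.coe_map, mem_map]
        filter_upwards [hpos] with lam hlam using ⟨hlow lam hlam y, hU0 lam hlam y⟩)
    exact ⟨a, ha, hFa⟩
  choose u hu hulim using hex
  have hulap : ∀ y, lapl u y = g y := by
    intro y
    have h1 : Tendsto (fun lam => lapl (U lam) y) F (nhds (lapl u y)) :=
      tendsto_finsetSum _ fun i _ =>
        ((hulim _).add (hulim _)).sub ((hulim _).const_mul 2)
    have h2 : Tendsto (fun lam => lapl (U lam) y) F (nhds (g y)) := by
      have hlo : Tendsto (fun lam : ℝ => g y - lam) F (nhds (g y)) := by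
        simpa using hid.const_sub (g y)
      refine tendsto_of_tendsto_of_tendsto_of_le_of_le' hlo tendsto_const_nhds ?_ ?_
      all_goals
        filter_upwards [hpos] with lam hlam
        rw [hU lam hlam]
        have e1 := Real.exp_le_one_iff.2 (hU0 lam hlam y)
        have e2 := Real.exp_le_one_iff.2 (hV lam hlam y)
        have e3 := Real.exp_pos (U lam y)
        have e4 := Real.exp_pos (V lam y)
        have e5 : 0 ≤ Real.exp (V lam y) * (1 - Real.exp (U lam y)) :=
          mul_nonneg e4.le (by linarith)
        have e6 : Real.exp (V lam y) * (1 - Real.exp (U lam y)) ≤ 1 :=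
          mul_le_one₀ e2 (by linarith) (by linarith)
        nlinarith
    exact tendsto_nhds_unique h1 h2
  have huinf : Tendsto u (atInfty n) (nhds 0) :=
    tendsto_of_tendsto_of_tendsto_of_le_of_le hΦlim tendsto_const_nhds
      (fun y => (hu y).1) (fun y => (hu y).2)
  have hle := max_principle hn (fun y => u y - Φ y) (by simpa using huinf.sub hΦlim)
    (fun y _ => by rw [lapl_sub, hulap, hΦ, sub_self]) x
  have heq : u x = Φ x := le_antisymm (by linarith) (hu x).1
  exact heq ▸ hulim x

/-- for n ≥ 3, as λ → 0⁺ the topological solutions converge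
pointwise to the superpositions of Green's functions
4π ∑ⱼ mⱼ Gₙ(x − pⱼ) and 4π ∑ⱼ nⱼ Gₙ(x − qⱼ). -/
theorem asymptotics_lambda_to_zero_high_dim
    {n : ℕ} (hn : 3 ≤ n)
    {k₁ k₂ : ℕ} (m : Fin k₁ → ℕ) (nn : Fin k₂ → ℕ)
    (p : Fin k₁ → Lat n) (q : Fin k₂ → Lat n)
    (g h : Lat n → ℝ)
    (hg : g = fun x => 4 * Real.pi * ∑ j, (m j : ℝ) * dirac (p j) x)
    (hh : h = fun x => 4 * Real.pi * ∑ j, (nn j : ℝ) * dirac (q j) x)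
    (G : Lat n → ℝ)
    (hG : ∀ x, lapl G x = dirac 0 x)
    (hGlim : Filter.Tendsto G (atInfty n) (nhds 0))
    (U V : ℝ → Lat n → ℝ)
    (hsol : ∀ lam : ℝ, 0 < lam → IsTopSol lam g h (U lam) (V lam))
    (x : Lat n) :
    Filter.Tendsto (fun lam => U lam x) (nhdsWithin 0 (Set.Ioi 0))
      (nhds (4 * Real.pi * ∑ j, (m j : ℝ) * G (x - p j))) ∧
    Filter.Tendsto (fun lam => V lam x) (nhdsWithin 0 (Set.Ioi 0))
      (nhds (4 * Real.pi * ∑ j, (nn j : ℝ) * G (x - q j))) := by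
  subst hg hh
  have hn0 : 0 < n := by omega
  have hU0 : ∀ lam : ℝ, 0 < lam → ∀ x, U lam x ≤ 0 := fun lam hlam =>
    sol_nonpos hn0 hlam _ _ _ (vortex_nonneg m p) (hsol lam hlam).1 (hsol lam hlam).2.2.1
  have hV0 : ∀ lam : ℝ, 0 < lam → ∀ x, V lam x ≤ 0 := fun lam hlam =>
    sol_nonpos hn0 hlam _ _ _ (vortex_nonneg nn q) (hsol lam hlam).2.1 (hsol lam hlam).2.2.2
  exact ⟨tendsto_component hn0 _ _ (vortex_nonneg m p) (lapl_green_sum m p G hG)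
      (tendsto_green_sum m p G hGlim) U V (fun lam hlam => (hsol lam hlam).1)
      (fun lam hlam => (hsol lam hlam).2.2.1) hV0 x,
    tendsto_component hn0 _ _ (vortex_nonneg nn q) (lapl_green_sum nn q G hG)
      (tendsto_green_sum nn q G hGlim) V U (fun lam hlam => (hsol lam hlam).2.1)
      (fun lam hlam => (hsol lam hlam).2.2.2) hU0 x⟩

end CS
end
end
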